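/- arXiv:2407.20890 — 4 statements merged into one kernel-verified Lean document; each statement's English description precedes it below -/
import Mathlib

section
/- Let X be a Banach space over 𝕂 (𝕂 = ℝ or ℂ) and T : X → X a bounded invertible linear operator that is dissipative, i.e., there is a closed subspace E₀ ⊆ X such that, setting E_n = Tⁿ(E₀) for n ∈ ℤ, every x ∈ X can be written as x = Σ_{n∈ℤ} x_n with x_n ∈ E_n, where the sums x⁺ = Σ_{n≥0} x_n and x⁻ = Σ_{n<0} x_n converge, this representation is unique, and each projection p_n : X → E_n, x ↦ x_n, is continuous. Then the map H : X → E₀^ℤ given by H(x) = (Tⁿ(x_{−n}))_{n∈ℤ} is linear and injective; its image B = H(X), equipped with the norm ‖H(x)‖_B = ‖x‖_X, is a Banach space which is invariant under the coordinate shift σ((y_n)_{n∈ℤ}) = (y_{n+1})_{n∈ℤ}; the shift σ is a bounded invertible linear operator on B; and H is a bounded invertible linear operator from X onto B satisfying H ∘ T = σ ∘ H, i.e., T is conjugate to σ. -/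
/-! The coordinates of `T x` are the coordinates of `x`, moved one place and mapped by `T`:
`c n (T x) = T (c (n - 1) x)`. Indeed `T` carries `Tⁿ⁻¹(E₀)` onto `Tⁿ(E₀)`, and applying `T` to the
expansion of `x` gives an expansion of `T x`, up to moving the term `T (c (-1) x)` from the
negative half to the nonnegative half; so uniqueness applies. This is `H ∘ T = σ ∘ H`, and the
invariance of the range of `H` under `σ` and `σ⁻¹` follows because `T` is onto.

Additivity and homogeneity of each `c n` also follow from uniqueness, and injectivity holds because
`x` is the sum of its coordinates, which `H x` determines. -/

open scoped ENNReal

namespace ShiftOperators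

variable {𝕂 : Type*} [RCLike 𝕂] {X : Type*} [NormedAddCommGroup X] [NormedSpace 𝕂 X]

/-- `backComp S n x = (S_{[1,n]})⁻¹ x = Sₙ⁻¹ (⋯ (S₁⁻¹ x))`, with the convention
`S_{[1,0]} = Id` (empty composition). -/
def backComp (S : ℤ → X ≃L[𝕂] X) : ℕ → X → X
  | 0, x => x
  | n + 1, x => (S ((n : ℤ) + 1)).symm (backComp S n x)

/-- `fwdComp S n x = S_{[-n+1,0]} x = S_{-n+1} (⋯ (S₀ x))`, with the convention
`fwdComp S 0 x = x` (empty composition). -/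
def fwdComp (S : ℤ → X ≃L[𝕂] X) : ℕ → X → X
  | 0, x => x
  | n + 1, x => S (-(n : ℤ)) (fwdComp S n x)

/-- The unit vectors `e_n(x)` associated to a sequence of operators `S` and a vector `x`:
`e_n(x) = (S_{[1,n]})⁻¹ x / ‖(S_{[1,n]})⁻¹ x‖` for `n ≥ 0` and
`e_n(x) = S_{[n+1,0]} x / ‖S_{[n+1,0]} x‖` for `n < 0`. -/
noncomputable def eVec (S : ℤ → X ≃L[𝕂] X) (x : X) (n : ℤ) : X :=
  if 0 ≤ n then ((‖backComp S n.toNat x‖ : ℝ) : 𝕂)⁻¹ • backComp S n.toNat x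
  else ((‖fwdComp S (-n).toNat x‖ : ℝ) : 𝕂)⁻¹ • fwdComp S (-n).toNat x

/-- The weights `ω_n(x)`: `ω_n(x) = ‖(S_{[1,n-1]})⁻¹ x‖ / ‖(S_{[1,n]})⁻¹ x‖` for `n > 0`
and `ω_n(x) = ‖S_{[n,0]} x‖ / ‖S_{[n+1,0]} x‖` for `n ≤ 0`. -/
noncomputable def wt (S : ℤ → X ≃L[𝕂] X) (x : X) (n : ℤ) : ℝ :=
  if 0 < n then ‖backComp S (n - 1).toNat x‖ / ‖backComp S n.toNat x‖
  else ‖fwdComp S (1 - n).toNat x‖ / ‖fwdComp S (-n).toNat x‖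

/-- `sup_{n ∈ ℤ} max {‖Sₙ‖, ‖Sₙ⁻¹‖} < ∞`. -/
def UnifBounded (S : ℤ → X ≃L[𝕂] X) : Prop :=
  ∃ C : ℝ, ∀ n : ℤ, ‖(S n : X →L[𝕂] X)‖ ≤ C ∧ ‖((S n).symm : X →L[𝕂] X)‖ ≤ C

/-- A map is topologically transitive. -/
def TopolTransitive {Y : Type*} [TopologicalSpace Y] (T : Y → Y) : Prop :=
  ∀ U V : Set Y, IsOpen U → IsOpen V → U.Nonempty → V.Nonempty →
    ∃ n : ℕ, (T^[n] '' U ∩ V).Nonempty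

/-- A map is (topologically) mixing. -/
def TopolMixing {Y : Type*} [TopologicalSpace Y] (T : Y → Y) : Prop :=
  ∀ U V : Set Y, IsOpen U → IsOpen V → U.Nonempty → V.Nonempty →
    ∃ N : ℕ, ∀ n ≥ N, (T^[n] '' U ∩ V).Nonempty

/-- A map has the (linear) shadowing property with constant `K`: every bounded sequence
`(z_n)` admits a bounded sequence `(x_n)` with `x_{n+1} - T x_n = z_n` and
`sup ‖x_n‖ ≤ K sup ‖z_n‖`. -/
def ShadowingWith {Y : Type*} [NormedAddCommGroup Y] (T : Y → Y) (K : ℝ) : Prop :=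
  ∀ z : ℤ → Y, BddAbove (Set.range fun n => ‖z n‖) →
    ∃ x : ℤ → Y, BddAbove (Set.range fun n => ‖x n‖) ∧
      (∀ n : ℤ, x (n + 1) - T (x n) = z n) ∧
      (⨆ n : ℤ, ‖x n‖) ≤ K * ⨆ n : ℤ, ‖z n‖

/-- A map has the (linear) shadowing property. -/
def Shadowing {Y : Type*} [NormedAddCommGroup Y] (T : Y → Y) : Prop :=
  ∃ K > 0, ShadowingWith T K

/-- A bounded invertible operator is generalized hyperbolic: `Y = M ⊕ N` for closed
subspaces with `T M ⊆ M`, `T⁻¹ N ⊆ N`, `T` uniformly contracting on `M` and `T⁻¹`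
uniformly contracting on `N`. -/
def GeneralizedHyperbolic {Y : Type*} [NormedAddCommGroup Y] [NormedSpace 𝕂 Y]
    (T : Y ≃L[𝕂] Y) : Prop :=
  ∃ M N : Submodule 𝕂 Y, IsClosed (M : Set Y) ∧ IsClosed (N : Set Y) ∧ IsCompl M N ∧
    (∀ u ∈ M, T u ∈ M) ∧ (∀ v ∈ N, T.symm v ∈ N) ∧
    ∃ C > 0, ∃ lam : ℝ, 0 < lam ∧ lam < 1 ∧
      (∀ u ∈ M, ∀ n : ℕ, ‖(⇑T)^[n] u‖ ≤ C * lam ^ n * ‖u‖) ∧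
      (∀ v ∈ N, ∀ n : ℕ, ‖(⇑T.symm)^[n] v‖ ≤ C * lam ^ n * ‖v‖)

end ShiftOperators

open ShiftOperators

/-- **Dissipative operators are conjugate to shift operators.** Let `T` be a bounded
invertible linear operator on a Banach space `X` which is dissipative: there is a
closed subspace `E₀` such that every `x ∈ X` has a unique representation
`x = Σ_{n<0} xₙ + Σ_{n≥0} xₙ` with `xₙ = c n x ∈ Tⁿ(E₀)`, both series converging, the
coordinate projections being continuous.  Then `H : X → E₀^ℤ`,
`H x = (Tⁿ (x₋ₙ))ₙ`, is linear and injective, takes values in `E₀`, its image is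
invariant under the two-sided coordinate shift, and `H ∘ T = σ ∘ H` where `σ` is the
coordinate shift; i.e. `T` is conjugate to a shift operator (with `Sₙ = Id`) on the
Banach space `B = H(X)` normed by `‖H x‖_B = ‖x‖`. -/
theorem dissipative_operator_conjugate_to_shift
    {𝕂 : Type*} [RCLike 𝕂] {X : Type*} [NormedAddCommGroup X] [NormedSpace 𝕂 X]
    [CompleteSpace X]
    (T : X ≃L[𝕂] X) (E₀ : Submodule 𝕂 X) (hE₀ : IsClosed (E₀ : Set X))
    (c : ℤ → X → X)
    (hmem : ∀ (n : ℤ) (x : X), (T ^ (-n)) (c n x) ∈ E₀)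
    (hconv : ∀ x : X, ∃ a b : X,
      Filter.Tendsto (fun N : ℕ => ∑ k ∈ Finset.range N, c (k : ℤ) x)
        Filter.atTop (nhds a) ∧
      Filter.Tendsto (fun N : ℕ => ∑ k ∈ Finset.range N, c (-(k : ℤ) - 1) x)
        Filter.atTop (nhds b) ∧
      x = b + a)
    (huniq : ∀ (x : X) (y : ℤ → X), (∀ n : ℤ, (T ^ (-n)) (y n) ∈ E₀) →
      ∀ a b : X,
        Filter.Tendsto (fun N : ℕ => ∑ k ∈ Finset.range N, y (k : ℤ))
          Filter.atTop (nhds a) →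
        Filter.Tendsto (fun N : ℕ => ∑ k ∈ Finset.range N, y (-(k : ℤ) - 1))
          Filter.atTop (nhds b) →
        x = b + a → y = fun n => c n x)
    (hcont : ∀ n : ℤ, Continuous (c n)) :
    (∀ (x : X) (n : ℤ), (T ^ n) (c (-n) x) ∈ E₀) ∧
    (∀ x y : X, (fun n : ℤ => (T ^ n) (c (-n) (x + y))) =
      (fun n : ℤ => (T ^ n) (c (-n) x)) + fun n : ℤ => (T ^ n) (c (-n) y)) ∧
    (∀ (α : 𝕂) (x : X), (fun n : ℤ => (T ^ n) (c (-n) (α • x))) =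
      α • fun n : ℤ => (T ^ n) (c (-n) x)) ∧
    Function.Injective (fun x : X => fun n : ℤ => (T ^ n) (c (-n) x)) ∧
    (∀ (x : X) (n : ℤ), (T ^ n) (c (-n) (T x)) = (T ^ (n + 1)) (c (-(n + 1)) x)) ∧
    (∀ u : ℤ → X, u ∈ Set.range (fun x : X => fun n : ℤ => (T ^ n) (c (-n) x)) →
      (fun n : ℤ => u (n + 1)) ∈ Set.range (fun x : X => fun n : ℤ => (T ^ n) (c (-n) x))) ∧
    (∀ u : ℤ → X, u ∈ Set.range (fun x : X => fun n : ℤ => (T ^ n) (c (-n) x)) →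
      (fun n : ℤ => u (n - 1)) ∈ Set.range (fun x : X => fun n : ℤ => (T ^ n) (c (-n) x))) := by
  have hadd : ∀ (n : ℤ) (x y : X), c n (x + y) = c n x + c n y := by
    intro n x y
    obtain ⟨a, b, ha, hb, hx⟩ := hconv x
    obtain ⟨a', b', ha', hb', hy⟩ := hconv y
    refine (congrFun (huniq (x + y) (fun n => c n x + c n y) (fun n => ?_) (a + a') (b + b')
      ?_ ?_ ?_) n).symm
    · rw [map_add]
      exact E₀.add_mem (hmem n x) (hmem n y)
    · simpa only [Finset.sum_add_distrib] using ha.add ha'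
    · simpa only [Finset.sum_add_distrib] using hb.add hb'
    · rw [hx, hy]; abel
  have hsmul : ∀ (n : ℤ) (α : 𝕂) (x : X), c n (α • x) = α • c n x := by
    intro n α x
    obtain ⟨a, b, ha, hb, hx⟩ := hconv x
    refine (congrFun (huniq (α • x) (fun n => α • c n x) (fun n => ?_) (α • a) (α • b)
      ?_ ?_ ?_) n).symm
    · rw [map_smul]
      exact E₀.smul_mem α (hmem n x)
    · simpa only [Finset.smul_sum] using ha.const_smul α
    · simpa only [Finset.smul_sum] using hb.const_smul α
    · rw [← smul_add, ← hx]
  have hpow : ∀ (n : ℤ) (x : X), (T ^ (n + 1)) x = (T ^ n) (T x) := by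
    intro n x
    rw [zpow_add_one]
    rfl
  have hshift : ∀ (n : ℤ) (x : X), c n (T x) = T (c (n - 1) x) := by
    intro n x
    obtain ⟨a, b, ha, hb, hx⟩ := hconv x
    -- The term `T (c (-1) x)` has index `0` in the expansion of `T x`, hence changes halves.
    refine (congrFun (huniq (T x) (fun n => T (c (n - 1) x)) (fun n => ?_)
      (T a + T (c (-1) x)) (T b - T (c (-1) x)) ?_ ?_ ?_) n).symm
    · rw [← hpow, show -n + 1 = -(n - 1) by ring]
      exact hmem (n - 1) x
    · rw [← Filter.tendsto_add_atTop_iff_nat 1]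
      have h := ((T.continuous.tendsto a).comp ha).add_const (T (c (-1) x))
      refine h.congr fun N => ?_
      simp [Finset.sum_range_succ', map_sum]
    · have h := ((T.continuous.tendsto b).comp
        ((Filter.tendsto_add_atTop_iff_nat 1).2 hb)).sub_const (T (c (-1) x))
      refine h.congr fun N => ?_
      simp [Finset.sum_range_succ', map_sum, sub_eq_add_neg, add_comm, add_left_comm]
    · rw [hx, map_add]; abel
  have hcomm : ∀ (x : X) (n : ℤ),
      (T ^ n) (c (-n) (T x)) = (T ^ (n + 1)) (c (-(n + 1)) x) := by
    intro x n
    rw [hshift, hpow, show -n - 1 = -(n + 1) by ring]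
  refine ⟨fun x n => ?_, fun x y => ?_, fun α x => ?_, fun x y hxy => ?_, hcomm, ?_, ?_⟩
  · simpa only [neg_neg] using hmem (-n) x
  · funext n
    simp only [Pi.add_apply, hadd, map_add]
  · funext n
    simp only [Pi.smul_apply, hsmul, map_smul]
  · have hc : ∀ n : ℤ, c n x = c n y := fun n => by
      simpa only [neg_neg] using (T ^ (-n)).injective (congrFun hxy (-n))
    obtain ⟨a, b, ha, hb, hx⟩ := hconv x
    obtain ⟨a', b', ha', hb', hy⟩ := hconv y
    simp only [hc] at ha hb
    rw [hx, hy, tendsto_nhds_unique ha ha', tendsto_nhds_unique hb hb']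
  · rintro _ ⟨x, rfl⟩
    exact ⟨T x, funext fun n => hcomm x n⟩
  · rintro _ ⟨x, rfl⟩
    refine ⟨T.symm x, funext fun n => ?_⟩
    have h := hcomm (T.symm x) (n - 1)
    rw [T.apply_symm_apply, sub_add_cancel] at h
    exact h.symm
end

section
/- Let X be a Hilbert space over 𝕂 and 𝒮 = (S_n)_{n∈ℤ} a sequence of bounded invertible linear operators on X with sup_{n∈ℤ} max{‖S_n‖, ‖S_n⁻¹‖} < ∞. Suppose 𝒮 has an orthogonal basis 𝓔, i.e., 𝓔 ⊆ X∖{0} is such that for every n ∈ ℤ the set 𝓔_n = {e_n(x) : x ∈ 𝓔} is an orthonormal basis (complete orthonormal system) of X. Then for every x ∈ 𝓔 and every 1 ≤ p < ∞, the weighted backward shift B_{ω(x)} : ℓ_p(𝕂) → ℓ_p(𝕂) is a factor of the shift operator σ_𝒮 : ℓ_p(X) → ℓ_p(X); indeed the map Γ : ℓ_p(X) → ℓ_p(𝕂), Γ((x_n)_{n∈ℤ}) = (⟨x_n, e_n(x)⟩)_{n∈ℤ}, is a bounded surjective linear map satisfying Γ ∘ σ_𝒮 = B_{ω(x)} ∘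 Γ. -/
/-!
The operator `S (n + 1)` carries `e_{n+1}(x)` to the multiple `ω_{n+1}(x) e_n(x)` of `e_n(x)`
(`map_eVec`). Thus `S (n + 1)` maps the orthonormal basis `𝓔_{n+1}` to scalar multiples of the
corresponding vectors of the orthonormal basis `𝓔_n`: in these bases it is diagonal, with real
diagonal entries. Reading off the coordinate along `e_n(x)` therefore gives
`⟨S (n + 1) y, e_n(x)⟩ = ω_{n+1}(x) ⟨y, e_{n+1}(x)⟩` for every `y`, first on the basis `𝓔_{n+1}` and
then everywhere by density (`inner_eVec_map`). This is exactly the relation `Γ ∘ σ = B ∘ Γ` at the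
coordinate `n`. The map `Γ` is bounded because the functionals `⟨·, e_n(x)⟩` have norm one, and it
is onto because `(a_n e_n(x))ₙ` is a preimage of `(a_n)ₙ`.
-/

open scoped ENNReal

open ShiftOperators

namespace ShiftOperators

theorem map_eVec {𝕂 : Type*} [RCLike 𝕂] {X : Type*} [NormedAddCommGroup X] [NormedSpace 𝕂 X]
    (S : ℤ → X ≃L[𝕂] X) (x : X) (n : ℤ) :
    S (n + 1) (eVec S x (n + 1)) = ((wt S x (n + 1) : ℝ) : 𝕂) • eVec S x n := by
  -- Normalizing `v` and rescaling by `‖v‖ / c` amounts to dividing by `c`, also for `v = 0`.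
  have key : ∀ (v : X) (c : ℝ),
      ((c : ℝ) : 𝕂)⁻¹ • v = (((‖v‖ / c : ℝ)) : 𝕂) • (((‖v‖ : ℝ) : 𝕂)⁻¹ • v) := by
    intro v c
    rcases eq_or_ne v 0 with rfl | hv
    · simp
    · have hv' : ((‖v‖ : ℝ) : 𝕂) ≠ 0 := by simpa using hv
      rw [smul_smul]
      congr 1
      push_cast
      field_simp
  rcases lt_or_ge n 0 with hn | hn
  · obtain ⟨m, rfl⟩ : ∃ m : ℕ, n = -(m : ℤ) - 1 := ⟨(-n - 1).toNat, by omega⟩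
    have h1 : -(m : ℤ) - 1 + 1 = -m := by ring
    have h2 : (-(-(m : ℤ) - 1)).toNat = m + 1 := by omega
    have h3 : (1 - -(m : ℤ)).toNat = m + 1 := by omega
    have h4 : (-(-(m : ℤ))).toNat = m := by omega
    -- The two formulas for `e_0(x)` agree, so the one for negative indices also covers `m = 0`.
    have h5 : eVec S x (-(m : ℤ)) = ((‖fwdComp S m x‖ : ℝ) : 𝕂)⁻¹ • fwdComp S m x := by
      rcases Nat.eq_zero_or_pos m with rfl | hm
      · simp [eVec, backComp, fwdComp]
      · rw [eVec, if_neg (by omega), h4]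
    rw [h1, h5, wt, if_neg (by omega), h3, h4, eVec, if_neg (by omega), h2, ← key, map_smul]
    rfl
  · obtain ⟨m, rfl⟩ := Int.eq_ofNat_of_zero_le hn
    have h1 : ((m : ℤ) + 1).toNat = m + 1 := by omega
    have h2 : ((m : ℤ) + 1 - 1).toNat = m := by omega
    have h3 : S ((m : ℤ) + 1) (backComp S (m + 1) x) = backComp S m x :=
      (S ((m : ℤ) + 1)).apply_symm_apply _
    rw [wt, if_pos (by omega), h1, h2, eVec, if_pos (by omega), h1, eVec, if_pos (by omega),
      Int.toNat_natCast, ← key, map_smul, h3]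

/-- The coordinate functional along `e_n(x)` intertwines `S (n + 1)` with multiplication by
`ω_{n+1}(x)`. Mathlib's inner product is linear in the second argument, so `⟨y, e⟩` is written
`inner 𝕂 e y`. -/
theorem inner_eVec_map {𝕂 : Type*} [RCLike 𝕂] {X : Type*} [NormedAddCommGroup X]
    [InnerProductSpace 𝕂 X] (S : ℤ → X ≃L[𝕂] X) {ι : Type*} (b : ι → X)
    (hON : ∀ n : ℤ, Orthonormal 𝕂 (fun i => eVec S (b i) n))
    (hcomplete : ∀ n : ℤ,
      (Submodule.span 𝕂 (Set.range fun i => eVec S (b i) n)).topologicalClosure = ⊤)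
    (i : ι) (n : ℤ) (y : X) :
    inner 𝕂 (eVec S (b i) n) (S (n + 1) y) =
      ((wt S (b i) (n + 1) : ℝ) : 𝕂) * inner 𝕂 (eVec S (b i) (n + 1)) y := by
  classical
  have h : (innerSL 𝕂 (eVec S (b i) n)).comp (S (n + 1) : X →L[𝕂] X) =
      ((wt S (b i) (n + 1) : ℝ) : 𝕂) • innerSL 𝕂 (eVec S (b i) (n + 1)) := by
    refine ContinuousLinearMap.ext_on
      (Submodule.dense_iff_topologicalClosure_eq_top.2 (hcomplete (n + 1))) ?_
    rintro _ ⟨j, rfl⟩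
    have h1 := orthonormal_iff_ite.1 (hON n) i j
    have h2 := orthonormal_iff_ite.1 (hON (n + 1)) i j
    simp only [ContinuousLinearMap.comp_apply, ContinuousLinearEquiv.coe_coe, map_eVec,
      smul_apply, innerSL_apply_apply, inner_smul_right, smul_eq_mul, h1, h2]
    split_ifs with hij
    · rw [hij]
    · simp
  simpa using congrArg (fun T : X →L[𝕂] 𝕂 => T y) h

end ShiftOperators

/-- **Factors of shifts.** If the sequence `𝒮 = (Sₙ)` of uniformly bounded invertible
operators on a Hilbert space `X` has an orthogonal basis `𝓔 = (b i)`, then for every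
`x = b i ∈ 𝓔` the weighted backward shift `B_{ω(x)}` on `ℓ_p(𝕂)` is a factor of the shift
operator `σ_𝒮` on `ℓ_p(X)`, the factor map being `Γ((xₙ)ₙ) = (⟨xₙ, eₙ(x)⟩)ₙ`. -/
theorem weighted_shift_factor_of_shift_operator
    {𝕂 : Type*} [RCLike 𝕂] {X : Type*} [NormedAddCommGroup X] [InnerProductSpace 𝕂 X]
    [CompleteSpace X]
    (S : ℤ → X ≃L[𝕂] X) (hS : UnifBounded S)
    {ι : Type*} (b : ι → X) (hb : ∀ i, b i ≠ 0)
    (hON : ∀ n : ℤ, Orthonormal 𝕂 (fun i => eVec S (b i) n))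
    (hcomplete : ∀ n : ℤ,
      (Submodule.span 𝕂 (Set.range fun i => eVec S (b i) n)).topologicalClosure = ⊤)
    (p : ℝ≥0∞) [Fact (1 ≤ p)] (hp : p ≠ ∞)
    (σ : lp (fun _ : ℤ => X) p ≃L[𝕂] lp (fun _ : ℤ => X) p)
    (hσ : ∀ (u : lp (fun _ : ℤ => X) p) (n : ℤ), σ u n = S (n + 1) (u (n + 1)))
    (i : ι)
    (B : lp (fun _ : ℤ => 𝕂) p ≃L[𝕂] lp (fun _ : ℤ => 𝕂) p)
    (hB : ∀ (a : lp (fun _ : ℤ => 𝕂) p) (n : ℤ),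
      B a n = ((wt S (b i) (n + 1) : ℝ) : 𝕂) * a (n + 1)) :
    ∃ Γ : lp (fun _ : ℤ => X) p →L[𝕂] lp (fun _ : ℤ => 𝕂) p,
      Function.Surjective Γ ∧
      (∀ (u : lp (fun _ : ℤ => X) p) (n : ℤ), Γ u n = @inner 𝕂 X _ (eVec S (b i) n) (u n)) ∧
      (∀ u : lp (fun _ : ℤ => X) p, Γ (σ u) = B (Γ u)) := by
  have hnorm : ∀ n, ‖eVec S (b i) n‖ = 1 := fun n => (hON n).1 i
  refine ⟨lp.mapCLM p (fun n => innerSL 𝕂 (eVec S (b i) n)) zero_le_one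
    (fun n => by rw [innerSL_apply_norm, hnorm n]), ?_, ?_, ?_⟩
  · intro a
    have hmem : Memℓp (fun n : ℤ => a n • eVec S (b i) n) p :=
      (lp.memℓp a).mono' fun n => by rw [norm_smul, hnorm n, mul_one]
    refine ⟨⟨_, hmem⟩, ?_⟩
    ext n
    simp [inner_self_eq_norm_sq_to_K, hnorm n]
  · intro u n
    simp
  · intro u
    ext n
    rw [hB]
    simp [hσ, inner_eVec_map S b hON hcomplete]
end

section
/- Let X be a Hilbert space over 𝕂, 1 ≤ p < ∞, and 𝒮 = (S_n)_{n∈ℤ} a sequence of bounded invertible linear operators on X with sup_{n∈ℤ} max{‖S_n‖, ‖S_n⁻¹‖} < ∞ having an orthogonal basis 𝓔 (i.e., for every n ∈ ℤ the set 𝓔_n = {e_n(x) : x ∈ 𝓔} is an orthonormal basis of X). If the shift operator σ_𝒮 : ℓ_p(X) → ℓ_p(X) is topologically transitive, then B_{ω(x)} : ℓ_p(𝕂) → ℓ_p(𝕂) is topologically transitive for every x ∈ 𝓔; if σ_𝒮 is mixing, then every B_{ω(x)} is mixing; and if σ_𝒮 has the shadowing property, then every B_{ω(x)} has the shadowing property.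 -/
/-!
For a fixed basis vector `x`, the coordinate map `π u = (⟪e_n(x), u_n⟫)_n` from `ℓ_p(X)` to `ℓ_p(𝕂)`
is a linear contraction with an isometric linear right inverse `J a = (a_n e_n(x))_n`. Everything
follows from the intertwining relation `π ∘ σ = B_{ω(x)} ∘ π`: transitivity, mixing and shadowing all
pass to factors (for shadowing, lift the perturbation by `J`, shadow it, and project by `π`).

The intertwining relation is a statement about each coordinate, namely
`⟪e_n(x), S_{n+1} v⟫ = ω_{n+1}(x) ⟪e_{n+1}(x), v⟫` for all `v`. Since
`S_{n+1} e_{n+1}(y) = ω_{n+1}(y) e_n(y)` for every basis vector `y` (`S_eVec`), orthonormality of the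
`e_n(y)` and of the `e_{n+1}(y)` gives it on the vectors `v = e_{n+1}(y)`, and these span a dense
subspace (`inner_eVec_S`).
-/


open scoped ENNReal

open ShiftOperators

namespace ShiftOperators

section Factor

theorem TopolTransitive.of_semiconj {Y Z : Type*} [TopologicalSpace Y] [TopologicalSpace Z]
    {T : Y → Y} {R : Z → Z} {π : Y → Z} (hπ : Continuous π) (hsurj : π.Surjective)
    (h : Function.Semiconj π T R) (hT : TopolTransitive T) : TopolTransitive R := by
  intro U V hU hV hUn hVn
  obtain ⟨n, _, ⟨y, hy, rfl⟩, hyV⟩ := hT _ _ (hU.preimage hπ) (hV.preimage hπ)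
    (hUn.preimage hsurj) (hVn.preimage hsurj)
  exact ⟨n, R^[n] (π y), ⟨π y, hy, rfl⟩, (h.iterate_right n).eq y ▸ hyV⟩

theorem TopolMixing.of_semiconj {Y Z : Type*} [TopologicalSpace Y] [TopologicalSpace Z]
    {T : Y → Y} {R : Z → Z} {π : Y → Z} (hπ : Continuous π) (hsurj : π.Surjective)
    (h : Function.Semiconj π T R) (hT : TopolMixing T) : TopolMixing R := by
  intro U V hU hV hUn hVn
  obtain ⟨N, hN⟩ := hT _ _ (hU.preimage hπ) (hV.preimage hπ)
    (hUn.preimage hsurj) (hVn.preimage hsurj)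
  refine ⟨N, fun n hn => ?_⟩
  obtain ⟨_, ⟨y, hy, rfl⟩, hyV⟩ := hN n hn
  exact ⟨R^[n] (π y), ⟨π y, hy, rfl⟩, (h.iterate_right n).eq y ▸ hyV⟩

/-- Shadowing passes to a factor when the factor map is a contraction and has a right inverse which
preserves norms; the shadowing constant is unchanged. -/
theorem Shadowing.of_semiconj {Y Z : Type*} [NormedAddCommGroup Y] [NormedAddCommGroup Z]
    {T : Y → Y} {R : Z → Z} (π : Y →+ Z) (hπ : ∀ y, ‖π y‖ ≤ ‖y‖)
    (J : Z → Y) (hJ : ∀ z, ‖J z‖ = ‖z‖) (hπJ : ∀ z, π (J z) = z)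
    (h : Function.Semiconj π T R) (hT : Shadowing T) : Shadowing R := by
  obtain ⟨K, hK, hT⟩ := hT
  refine ⟨K, hK, fun z hz => ?_⟩
  obtain ⟨x, hxb, hx, hxK⟩ := hT (fun n => J (z n)) (by simpa only [hJ] using hz)
  refine ⟨fun n => π (x n), ?_, fun n => ?_, ?_⟩
  · obtain ⟨C, hC⟩ := hxb
    refine ⟨C, ?_⟩
    rintro _ ⟨n, rfl⟩
    exact (hπ _).trans (hC ⟨n, rfl⟩)
  · rw [← h.eq, ← map_sub, hx, hπJ]
  · simp only [hJ] at hxK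
    exact (ciSup_mono hxb fun n => hπ (x n)).trans hxK

end Factor

section LpMap

variable {𝕂 : Type*} [RCLike 𝕂] {E F : Type*} [NormedAddCommGroup E] [NormedSpace 𝕂 E]
  [NormedAddCommGroup F] [NormedSpace 𝕂 F]

/-- The map `(v_n) ↦ (L_n v_n)` from `ℓ_p(E)` to `ℓ_p(F)` induced by a sequence of linear
contractions `L_n : E → F`. -/
def lpMap (p : ℝ≥0∞) (L : ℤ → E →ₗ[𝕂] F) (hL : ∀ n v, ‖L n v‖ ≤ ‖v‖) :
    lp (fun _ : ℤ => E) p →ₗ[𝕂] lp (fun _ : ℤ => F) p where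
  toFun u := ⟨fun n => L n (u n), (lp.memℓp u).mono' fun n => hL n (u n)⟩
  map_add' u v := by
    ext n
    exact map_add (L n) (u n) (v n)
  map_smul' c u := by ext n; simp

@[simp]
theorem lpMap_apply (p : ℝ≥0∞) (L : ℤ → E →ₗ[𝕂] F) (hL : ∀ n v, ‖L n v‖ ≤ ‖v‖)
    (u : lp (fun _ : ℤ => E) p) (n : ℤ) : lpMap p L hL u n = L n (u n) := rfl

end LpMap

section Weights

variable {𝕂 : Type*} [RCLike 𝕂] {X : Type*} [NormedAddCommGroup X]

theorem backComp_ne_zero [NormedSpace 𝕂 X] (S : ℤ → X ≃L[𝕂] X) {x : X} (hx : x ≠ 0) (n : ℕ) :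
    backComp S n x ≠ 0 := by
  induction n with
  | zero => exact hx
  | succ n ih => simpa [backComp] using ih

theorem fwdComp_ne_zero [NormedSpace 𝕂 X] (S : ℤ → X ≃L[𝕂] X) {x : X} (hx : x ≠ 0) (n : ℕ) :
    fwdComp S n x ≠ 0 := by
  induction n with
  | zero => exact hx
  | succ n ih => simpa [fwdComp] using ih

theorem eVec_natCast [NormedSpace 𝕂 X] (S : ℤ → X ≃L[𝕂] X) (x : X) (m : ℕ) :
    eVec S x m = ((‖backComp S m x‖ : ℝ) : 𝕂)⁻¹ • backComp S m x := by
  simp [eVec]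

/-- The formula for `e_n(x)` with `n < 0` also holds at `n = 0`, as both compositions are then
empty. -/
theorem eVec_neg_natCast [NormedSpace 𝕂 X] (S : ℤ → X ≃L[𝕂] X) (x : X) (m : ℕ) :
    eVec S x (-m) = ((‖fwdComp S m x‖ : ℝ) : 𝕂)⁻¹ • fwdComp S m x := by
  cases m with
  | zero => simp [eVec, backComp, fwdComp]
  | succ m =>
    have h : ¬ (0 : ℤ) ≤ -((m + 1 : ℕ) : ℤ) := by omega
    rw [eVec, if_neg h, neg_neg, Int.toNat_natCast]

/-- `S_{n+1}` sends `e_{n+1}(x)` to `ω_{n+1}(x) e_n(x)`: both sides are the same multiple of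
`(S_{[1,n]})⁻¹ x` when `n ≥ 0`, and of `S_{[n+1,0]} x` when `n < 0`. -/
theorem S_eVec [NormedSpace 𝕂 X] (S : ℤ → X ≃L[𝕂] X) {x : X} (hx : x ≠ 0) (n : ℤ) :
    S (n + 1) (eVec S x (n + 1)) = ((wt S x (n + 1) : ℝ) : 𝕂) • eVec S x n := by
  rcases le_or_gt 0 n with hn | hn
  · lift n to ℕ using hn
    have h0 : ((‖backComp S n x‖ : ℝ) : 𝕂) ≠ 0 := by simpa using backComp_ne_zero S hx n
    have hw : wt S x ((n : ℤ) + 1) = ‖backComp S n x‖ / ‖backComp S (n + 1) x‖ := by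
      have h : (0 : ℤ) < n + 1 := by omega
      have h' : ((n : ℤ) + 1).toNat = n + 1 := by omega
      rw [wt, if_pos h, h', add_sub_cancel_right, Int.toNat_natCast]
    have he := eVec_natCast S x (n + 1)
    push_cast at he
    rw [he, hw, eVec_natCast, map_smul, smul_smul]
    congr 1
    · push_cast
      field_simp
    · simp [backComp]
  · obtain ⟨m, rfl⟩ : ∃ m : ℕ, n = -((m + 1 : ℕ) : ℤ) := ⟨(-n - 1).toNat, by omega⟩
    have h0 : ((‖fwdComp S (m + 1) x‖ : ℝ) : 𝕂) ≠ 0 := by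
      simpa using fwdComp_ne_zero S hx (m + 1)
    have hm : -((m + 1 : ℕ) : ℤ) + 1 = -(m : ℤ) := by omega
    have hw : wt S x (-(m : ℤ)) = ‖fwdComp S (m + 1) x‖ / ‖fwdComp S m x‖ := by
      have h : ¬ (0 : ℤ) < -(m : ℤ) := by omega
      have h' : (1 - -(m : ℤ)).toNat = m + 1 := by omega
      rw [wt, if_neg h, h', neg_neg, Int.toNat_natCast]
    rw [hm, hw, eVec_neg_natCast, eVec_neg_natCast, map_smul, smul_smul]
    congr 1
    push_cast
    field_simp

/-- Since `S_{n+1}` maps the orthonormal basis `(e_{n+1}(b_j))_j` to positive multiples of the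
orthonormal basis `(e_n(b_j))_j`, it commutes with taking coordinates, up to the weight. -/
theorem inner_eVec_S [InnerProductSpace 𝕂 X] (S : ℤ → X ≃L[𝕂] X)
    {ι : Type*} (b : ι → X) (hb : ∀ i, b i ≠ 0)
    (hON : ∀ n : ℤ, Orthonormal 𝕂 (fun i => eVec S (b i) n))
    (hcomplete : ∀ n : ℤ,
      (Submodule.span 𝕂 (Set.range fun i => eVec S (b i) n)).topologicalClosure = ⊤)
    (i : ι) (n : ℤ) (v : X) :
    inner 𝕂 (eVec S (b i) n) (S (n + 1) v) =
      ((wt S (b i) (n + 1) : ℝ) : 𝕂) * inner 𝕂 (eVec S (b i) (n + 1)) v := by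
  have key : (innerSL 𝕂 (eVec S (b i) n)).comp (S (n + 1) : X →L[𝕂] X) =
      ((wt S (b i) (n + 1) : ℝ) : 𝕂) • innerSL 𝕂 (eVec S (b i) (n + 1)) := by
    refine ContinuousLinearMap.ext_on
      (Submodule.dense_iff_topologicalClosure_eq_top.2 (hcomplete (n + 1))) ?_
    rintro _ ⟨j, rfl⟩
    classical
    have h1 := orthonormal_iff_ite.1 (hON n) i j
    have h2 := orthonormal_iff_ite.1 (hON (n + 1)) i j
    simp only [ContinuousLinearMap.comp_apply, ContinuousLinearEquiv.coe_coe, innerSL_apply_apply,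
      S_eVec S (hb j), inner_smul_right, smul_apply, smul_eq_mul, h1, h2]
    split_ifs with hij
    · rw [hij]
    · simp
  simpa using congrArg (fun f : X →L[𝕂] 𝕂 => f v) key

end Weights

end ShiftOperators

/-- If the shift operator `σ_𝒮` on `ℓ_p(X)` is topologically transitive (resp. mixing,
resp. has the shadowing property), then for every `x ∈ 𝓔` the weighted backward shift
`B_{ω(x)}` on `ℓ_p(𝕂)` is topologically transitive (resp. mixing, resp. has the
shadowing property). -/
theorem factor_dynamics_of_shift_operator
    {𝕂 : Type*} [RCLike 𝕂] {X : Type*} [NormedAddCommGroup X] [InnerProductSpace 𝕂 X]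
    [CompleteSpace X]
    (S : ℤ → X ≃L[𝕂] X) (hS : UnifBounded S)
    {ι : Type*} (b : ι → X) (hb : ∀ i, b i ≠ 0)
    (hON : ∀ n : ℤ, Orthonormal 𝕂 (fun i => eVec S (b i) n))
    (hcomplete : ∀ n : ℤ,
      (Submodule.span 𝕂 (Set.range fun i => eVec S (b i) n)).topologicalClosure = ⊤)
    (p : ℝ≥0∞) [Fact (1 ≤ p)] (hp : p ≠ ∞)
    (σ : lp (fun _ : ℤ => X) p ≃L[𝕂] lp (fun _ : ℤ => X) p)
    (hσ : ∀ (u : lp (fun _ : ℤ => X) p) (n : ℤ), σ u n = S (n + 1) (u (n + 1)))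
    (B : ι → (lp (fun _ : ℤ => 𝕂) p ≃L[𝕂] lp (fun _ : ℤ => 𝕂) p))
    (hB : ∀ (i : ι) (a : lp (fun _ : ℤ => 𝕂) p) (n : ℤ),
      B i a n = ((wt S (b i) (n + 1) : ℝ) : 𝕂) * a (n + 1)) :
    (TopolTransitive ⇑σ → ∀ i, TopolTransitive ⇑(B i)) ∧
    (TopolMixing ⇑σ → ∀ i, TopolMixing ⇑(B i)) ∧
    (Shadowing ⇑σ → ∀ i, Shadowing ⇑(B i)) := by
  have hp0 : p ≠ 0 := (zero_lt_one.trans_le (Fact.out : 1 ≤ p)).ne'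
  have hnorm : ∀ i n, ‖eVec S (b i) n‖ = 1 := fun i n => (hON n).1 i
  -- `π i u = (⟪e_n(b_i), u_n⟫)_n` and `J i a = (a_n e_n(b_i))_n`
  let π := fun i => lpMap (E := X) (F := 𝕂) p (fun n => (innerSL 𝕂 (eVec S (b i) n)).toLinearMap)
    fun n v => by simpa [hnorm] using norm_inner_le_norm (𝕜 := 𝕂) (eVec S (b i) n) v
  let J := fun i => lpMap (E := 𝕂) (F := X) p
    (fun n => LinearMap.toSpanSingleton 𝕂 X (eVec S (b i) n))
    fun n a => by simp [norm_smul, hnorm]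
  have hπ : ∀ i u, ‖π i u‖ ≤ ‖u‖ := fun i u => lp.norm_mono hp0 fun n => by
    simpa [π, hnorm] using norm_inner_le_norm (𝕜 := 𝕂) (eVec S (b i) n) (u n)
  have hJ : ∀ i a, ‖J i a‖ = ‖a‖ := fun i a => le_antisymm
    (lp.norm_mono hp0 fun n => by simp [J, norm_smul, hnorm])
    (lp.norm_mono hp0 fun n => by simp [J, norm_smul, hnorm])
  have hπJ : ∀ i a, π i (J i a) = a := fun i a => by
    ext n
    simp [π, J, inner_self_eq_norm_sq_to_K, hnorm]
  have hsemi : ∀ i, Function.Semiconj (π i) σ (B i) := fun i u => by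
    ext n
    simpa [π, hσ, hB] using inner_eVec_S S b hb hON hcomplete i n (u (n + 1))
  have hcont : ∀ i, Continuous (π i) := fun i =>
    AddMonoidHomClass.continuous_of_bound (π i) 1 fun u => by simpa using hπ i u
  have hsurj : ∀ i, Function.Surjective (π i) := fun i a => ⟨J i a, hπJ i a⟩
  exact ⟨fun h i => h.of_semiconj (hcont i) (hsurj i) (hsemi i),
    fun h i => h.of_semiconj (hcont i) (hsurj i) (hsemi i),
    fun h i => h.of_semiconj (π i).toAddMonoidHom (hπ i) (J i) (hJ i) (hπJ i) (hsemi i)⟩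
end

section
/- Let X be a finite dimensional Hilbert space over 𝕂 of dimension d ≥ 2 and 𝒮 = (S_n)_{n∈ℤ} a sequence of invertible linear operators on X with sup_{n∈ℤ} max{‖S_n‖, ‖S_n⁻¹‖} < ∞. Suppose 𝓔 = {b_1, …, b_d} ⊆ X∖{0} is such that each 𝓔_n = {e_n(b_i) : 1 ≤ i ≤ d} is a basis of X, and there exists 0 < γ < 1/(d−1) such that for every n ∈ ℤ and all distinct unit vectors u, v ∈ 𝓔_n one has |⟨u, v⟩| ≤ γ. Then, for each 1 ≤ p < ∞, the shift operator σ_𝒮 : ℓ_p(X) → ℓ_p(X) is conjugate (by a bounded invertible linear operator) to the finite product B_{ω(b_1)} × ⋯ × B_{ω(b_d)} : (ℓ_p(𝕂))^d → (ℓ_p(𝕂))^d with the sum norm. -/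
/-!
For each `n` the vectors `e_n(b_i)` are unit vectors with pairwise inner products of modulus at most
`γ < 1 / (d - 1)`, so their Gram matrix is uniformly diagonally dominant and
`(1 - (d - 1) γ) ∑ ‖c_i‖² ≤ ‖∑ c_i e_n(b_i)‖²` (`gram_lower_bound`). Hence the coordinates with
respect to these bases are bounded uniformly in `n`, and the synthesis operator
`(a_i)_i ↦ (∑ i, a_i(n) e_n(b_i))_n` is a bounded bijection from `(ℓ_p(𝕂))^d` onto `ℓ_p(X)`; its
inverse is bounded by the open mapping theorem. Since `S_{n+1} e_{n+1}(b) = ω_{n+1}(b) e_n(b)`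
(`apply_eVec_succ`), this operator intertwines the product of the weighted shifts with `σ_𝒮`.
-/

open scoped ENNReal

open ShiftOperators

namespace ShiftOperators

/-! ### Unnormalised orbits and the relation `S_{n+1} e_{n+1} = ω_{n+1} e_n` -/

section Orbit

variable {𝕂 : Type*} [RCLike 𝕂] {X : Type*} [NormedAddCommGroup X] [NormedSpace 𝕂 X]

/-- The two-sided orbit of `x` without normalisation: `(S_{[1,n]})⁻¹ x` for `n ≥ 0` and
`S_{[n+1,0]} x` for `n < 0`. -/
def orb (S : ℤ → X ≃L[𝕂] X) (x : X) (n : ℤ) : X :=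
  if 0 ≤ n then backComp S n.toNat x else fwdComp S (-n).toNat x

lemma orb_of_nonneg (S : ℤ → X ≃L[𝕂] X) (x : X) (n : ℕ) : orb S x n = backComp S n x := by
  simp [orb]

lemma orb_of_nonpos (S : ℤ → X ≃L[𝕂] X) (x : X) (n : ℕ) : orb S x (-n) = fwdComp S n x := by
  rcases n with _ | n
  · simp [orb, backComp, fwdComp]
  · have h : ¬ (0 : ℤ) ≤ -((n + 1 : ℕ) : ℤ) := by omega
    rw [orb, if_neg h, neg_neg, Int.toNat_natCast]

lemma apply_orb_succ (S : ℤ → X ≃L[𝕂] X) (x : X) (n : ℤ) :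
    S (n + 1) (orb S x (n + 1)) = orb S x n := by
  rcases le_or_gt 0 n with h | h
  · lift n to ℕ using h
    have e : (n : ℤ) + 1 = ((n + 1 : ℕ) : ℤ) := by push_cast; rfl
    rw [orb_of_nonneg, e, orb_of_nonneg, backComp, ← e, ContinuousLinearEquiv.apply_symm_apply]
  · obtain ⟨k, rfl⟩ : ∃ k : ℕ, n = -((k + 1 : ℕ) : ℤ) := ⟨(-n - 1).toNat, by omega⟩
    have e : -((k + 1 : ℕ) : ℤ) + 1 = -(k : ℤ) := by push_cast; ring
    rw [e, orb_of_nonpos, orb_of_nonpos, fwdComp]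

lemma orb_ne_zero (S : ℤ → X ≃L[𝕂] X) {x : X} (hx : x ≠ 0) (n : ℤ) : orb S x n ≠ 0 := by
  have h0 : orb S x 0 ≠ 0 := by simpa [orb, backComp] using hx
  have hstep : ∀ m : ℤ, orb S x m ≠ 0 ↔ orb S x (m + 1) ≠ 0 := fun m ↦ by
    rw [← apply_orb_succ, ne_eq, ne_eq, map_eq_zero_iff _ (S (m + 1)).injective]
  induction n with
  | zero => exact h0
  | succ n ih => exact (hstep n).1 ih
  | pred n ih => exact (hstep _).2 (by simpa using ih)

lemma eVec_eq (S : ℤ → X ≃L[𝕂] X) (x : X) (n : ℤ) :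
    eVec S x n = ((‖orb S x n‖ : ℝ) : 𝕂)⁻¹ • orb S x n := by
  unfold eVec orb
  split_ifs <;> rfl

lemma wt_succ_eq (S : ℤ → X ≃L[𝕂] X) (x : X) (n : ℤ) :
    wt S x (n + 1) = ‖orb S x n‖ / ‖orb S x (n + 1)‖ := by
  rcases le_or_gt 0 n with h | h
  · lift n to ℕ using h
    have e : (n : ℤ) + 1 = ((n + 1 : ℕ) : ℤ) := by push_cast; rfl
    rw [wt, if_pos (by omega), orb_of_nonneg, add_sub_cancel_right, e, orb_of_nonneg]
    rfl
  · obtain ⟨k, rfl⟩ : ∃ k : ℕ, n = -((k + 1 : ℕ) : ℤ) := ⟨(-n - 1).toNat, by omega⟩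
    have e : -((k + 1 : ℕ) : ℤ) + 1 = -(k : ℤ) := by push_cast; ring
    have e1 : (1 - -(k : ℤ)).toNat = k + 1 := by omega
    rw [e, wt, if_neg (by omega), orb_of_nonpos, orb_of_nonpos, neg_neg, e1, Int.toNat_natCast]

lemma norm_eVec (S : ℤ → X ≃L[𝕂] X) {x : X} (hx : x ≠ 0) (n : ℤ) : ‖eVec S x n‖ = 1 := by
  rw [eVec_eq]
  exact norm_smul_inv_norm (orb_ne_zero S hx n)

lemma apply_eVec_succ (S : ℤ → X ≃L[𝕂] X) {x : X} (hx : x ≠ 0) (n : ℤ) :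
    S (n + 1) (eVec S x (n + 1)) = ((wt S x (n + 1) : ℝ) : 𝕂) • eVec S x n := by
  have h : ((‖orb S x n‖ : ℝ) : 𝕂) ≠ 0 := by simpa using orb_ne_zero S hx n
  rw [eVec_eq, eVec_eq, wt_succ_eq, map_smul, apply_orb_succ, smul_smul]
  congr 1
  push_cast
  field_simp

end Orbit

/-! ### A lower bound for nearly orthogonal unit vectors -/

/-- Diagonal dominance of the Gram matrix of unit vectors whose pairwise inner products have modulus
at most `γ`. It carries information only when `(card ι - 1) γ < 1`. -/
lemma gram_lower_bound {𝕂 X ι : Type*} [RCLike 𝕂] [NormedAddCommGroup X] [InnerProductSpace 𝕂 X]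
    [Fintype ι] (e : ι → X) (he : ∀ i, ‖e i‖ = 1) {γ : ℝ} (hγ0 : 0 ≤ γ)
    (hangle : ∀ i j, i ≠ j → ‖@inner 𝕂 X _ (e i) (e j)‖ ≤ γ) (c : ι → 𝕂) :
    (1 - ((Fintype.card ι : ℝ) - 1) * γ) * ∑ i, ‖c i‖ ^ 2 ≤ ‖∑ i, c i • e i‖ ^ 2 := by
  classical
  have hterm : ∀ i j, (if i = j then (1 + γ) * ‖c i‖ ^ 2 else 0) - γ * (‖c i‖ * ‖c j‖) ≤
      RCLike.re (@inner 𝕂 X _ (c i • e i) (c j • e j)) := by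
    intro i j
    split_ifs with h
    · subst h
      rw [inner_self_eq_norm_sq, norm_smul, he]
      exact le_of_eq (by ring)
    · have h1 : ‖@inner 𝕂 X _ (c i • e i) (c j • e j)‖ ≤ γ * (‖c i‖ * ‖c j‖) := by
        rw [inner_smul_left, inner_smul_right, norm_mul, norm_mul, RCLike.norm_conj]
        calc ‖c i‖ * (‖c j‖ * ‖@inner 𝕂 X _ (e i) (e j)‖) ≤ ‖c i‖ * (‖c j‖ * γ) := by
              gcongr; exact hangle i j h
          _ = _ := by ring
      have h2 := (abs_le.1 (RCLike.abs_re_le_norm (@inner 𝕂 X _ (c i • e i) (c j • e j)))).1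
      linarith
  have hexp : ‖∑ i, c i • e i‖ ^ 2 =
      ∑ i, ∑ j, RCLike.re (@inner 𝕂 X _ (c i • e i) (c j • e j)) := by
    rw [← inner_self_eq_norm_sq (𝕜 := 𝕂), sum_inner, map_sum]
    exact Finset.sum_congr rfl fun i _ ↦ by rw [inner_sum, map_sum]
  have hsum : ∑ i, ∑ j, ((if i = j then (1 + γ) * ‖c i‖ ^ 2 else 0) - γ * (‖c i‖ * ‖c j‖)) =
      (1 + γ) * ∑ i, ‖c i‖ ^ 2 - γ * (∑ i, ‖c i‖) ^ 2 := by
    simp_rw [Finset.sum_sub_distrib, Finset.sum_ite_eq, Finset.mem_univ, if_true, ← Finset.mul_sum]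
    rw [sq (∑ i, ‖c i‖), Finset.sum_mul_sum]
    simp_rw [← Finset.mul_sum]
  have hcs : (∑ i, ‖c i‖) ^ 2 ≤ (Fintype.card ι : ℝ) * ∑ i, ‖c i‖ ^ 2 := by
    simpa using sq_sum_le_card_mul_sum_sq (s := Finset.univ) (f := fun i ↦ ‖c i‖)
  calc (1 - ((Fintype.card ι : ℝ) - 1) * γ) * ∑ i, ‖c i‖ ^ 2
      = (1 + γ) * ∑ i, ‖c i‖ ^ 2 - γ * ((Fintype.card ι : ℝ) * ∑ i, ‖c i‖ ^ 2) := by ring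
    _ ≤ (1 + γ) * ∑ i, ‖c i‖ ^ 2 - γ * (∑ i, ‖c i‖) ^ 2 := by gcongr
    _ ≤ ‖∑ i, c i • e i‖ ^ 2 := by
      rw [← hsum, hexp]
      exact Finset.sum_le_sum fun i _ ↦ Finset.sum_le_sum fun j _ ↦ hterm i j

/-! ### The synthesis operator -/

section Synthesis

variable {𝕂 : Type*} [RCLike 𝕂] {X : Type*} [NormedAddCommGroup X] [NormedSpace 𝕂 X]
  {ι : Type*} [Fintype ι]

/-- The synthesis operator `(a_i)_i ↦ (∑ i, a_i(n) • e i n)_n` from `(ℓ_p(𝕂))^ι` to `ℓ_p(X)`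
associated with families of unit vectors `e i n`. -/
noncomputable def synth (e : ι → ℤ → X) (he : ∀ i n, ‖e i n‖ = 1) (p : ℝ≥0∞) [Fact (1 ≤ p)] :
    PiLp 1 (fun _ : ι => lp (fun _ : ℤ => 𝕂) p) →L[𝕂] lp (fun _ : ℤ => X) p :=
  ∑ i, (lp.mapCLM (𝕜 := 𝕂) (E := fun _ : ℤ => 𝕂) (F := fun _ : ℤ => X) p
      (fun n ↦ ContinuousLinearMap.toSpanSingleton 𝕂 (e i n)) zero_le_one
      (fun n ↦ by rw [ContinuousLinearMap.norm_toSpanSingleton, he])).comp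
    (PiLp.proj (𝕜 := 𝕂) 1 (fun _ : ι => lp (fun _ : ℤ => 𝕂) p) i)

lemma synth_apply (e : ι → ℤ → X) (he : ∀ i n, ‖e i n‖ = 1) (p : ℝ≥0∞) [Fact (1 ≤ p)]
    (v : PiLp 1 (fun _ : ι => lp (fun _ : ℤ => 𝕂) p)) (n : ℤ) :
    synth e he p v n = ∑ i, v i n • e i n := by
  simp only [synth, sum_apply, lp.coeFn_sum]
  -- The sum lives in `PreLp`, a type synonym of the product on which `simp` does not evaluate it.
  refine (Finset.sum_apply n _ _).trans ?_
  simp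

/-- If the families `(e i n)_i` are bases whose coordinates are bounded uniformly in `n`, then
synthesis is bijective. -/
lemma synth_bijective (e : ι → ℤ → X) (he : ∀ i n, ‖e i n‖ = 1) (p : ℝ≥0∞) [Fact (1 ≤ p)]
    (hli : ∀ n, LinearIndependent 𝕂 fun i ↦ e i n)
    (hsp : ∀ n, Submodule.span 𝕂 (Set.range fun i ↦ e i n) = ⊤)
    {K : ℝ} (hK : ∀ n (c : ι → 𝕂) i, ‖c i‖ ≤ K * ‖∑ j, c j • e j n‖) :
    Function.Bijective (synth (𝕂 := 𝕂) e he p) := by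
  constructor
  · rw [injective_iff_map_eq_zero]
    intro v hv
    ext i n
    have h : ∑ j, v j n • e j n = 0 := by rw [← synth_apply e he, hv]; rfl
    exact Fintype.linearIndependent_iff.1 (hli n) (fun j ↦ v j n) h i
  · intro u
    have hex : ∀ n, ∃ c : ι → 𝕂, ∑ i, c i • e i n = u n := fun n ↦
      (Submodule.mem_span_range_iff_exists_fun 𝕂).1 (by rw [hsp n]; trivial)
    choose c hc using hex
    have hmem : ∀ i, Memℓp (fun n ↦ c n i) p := fun i ↦
      ((lp.memℓp u).norm.const_mul K).mono fun n ↦ by simpa only [hc n] using hK n (c n) i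
    refine ⟨WithLp.toLp 1 fun i ↦ ⟨fun n ↦ c n i, hmem i⟩, ?_⟩
    ext n
    rw [synth_apply, ← hc n]

end Synthesis

end ShiftOperators

/-- If `X` is a `d`-dimensional Hilbert space, `d ≥ 2`, and the sequence `𝒮` has a
basis `𝓔` such that for some `0 < γ < 1/(d-1)` all the (cosines of) angles between
distinct vectors of each `𝓔ₙ` lie in `[-γ, γ]`, then the shift operator `σ_𝒮` on
`ℓ_p(X)` is conjugate to the product of the weighted backward shifts `B_{ω(b i)}`. -/
theorem shift_operator_conjugate_of_separated_basis
    {𝕂 : Type*} [RCLike 𝕂] {X : Type*} [NormedAddCommGroup X] [InnerProductSpace 𝕂 X]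
    [FiniteDimensional 𝕂 X] {d : ℕ} (hd : 2 ≤ d) (hdim : Module.finrank 𝕂 X = d)
    (S : ℤ → X ≃L[𝕂] X) (hS : UnifBounded S)
    (b : Fin d → X) (hb : ∀ i, b i ≠ 0)
    (hEli : ∀ n : ℤ, LinearIndependent 𝕂 (fun i => eVec S (b i) n))
    (hEsp : ∀ n : ℤ, Submodule.span 𝕂 (Set.range fun i => eVec S (b i) n) = ⊤)
    (γ : ℝ) (hγ0 : 0 < γ) (hγ : γ < 1 / ((d : ℝ) - 1))
    (hangle : ∀ (n : ℤ) (i j : Fin d), i ≠ j →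
      ‖@inner 𝕂 X _ (eVec S (b i) n) (eVec S (b j) n)‖ ≤ γ)
    (p : ℝ≥0∞) [Fact (1 ≤ p)] (hp : p ≠ ∞)
    (σ : lp (fun _ : ℤ => X) p ≃L[𝕂] lp (fun _ : ℤ => X) p)
    (hσ : ∀ (u : lp (fun _ : ℤ => X) p) (n : ℤ), σ u n = S (n + 1) (u (n + 1)))
    (P : PiLp 1 (fun _ : Fin d => lp (fun _ : ℤ => 𝕂) p) ≃L[𝕂]
         PiLp 1 (fun _ : Fin d => lp (fun _ : ℤ => 𝕂) p))
    (hP : ∀ (v : PiLp 1 (fun _ : Fin d => lp (fun _ : ℤ => 𝕂) p)) (i : Fin d) (n : ℤ),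
      P v i n = ((wt S (b i) (n + 1) : ℝ) : 𝕂) * v i (n + 1)) :
    ∃ H : lp (fun _ : ℤ => X) p ≃L[𝕂] PiLp 1 (fun _ : Fin d => lp (fun _ : ℤ => 𝕂) p),
      ∀ u : lp (fun _ : ℤ => X) p, H (σ u) = P (H u) := by
  have : CompleteSpace X := FiniteDimensional.complete 𝕂 X
  set e : Fin d → ℤ → X := fun i n ↦ eVec S (b i) n with he_def
  have he : ∀ i n, ‖e i n‖ = 1 := fun i n ↦ norm_eVec S (hb i) n
  obtain ⟨δ, hδ_def⟩ : ∃ δ : ℝ, δ = 1 - ((d : ℝ) - 1) * γ := ⟨_, rfl⟩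
  have hδ : 0 < δ := by
    have hd1 : (0 : ℝ) < (d : ℝ) - 1 := by
      have : (2 : ℝ) ≤ d := by exact_mod_cast hd
      linarith
    rw [lt_div_iff₀ hd1] at hγ
    linarith
  -- A single coordinate is controlled by the `ℓ²` norm of all of them, whence the constant `δ⁻¹ᐟ²`.
  have hK : ∀ n (c : Fin d → 𝕂) i, ‖c i‖ ≤ (√δ)⁻¹ * ‖∑ j, c j • e j n‖ := by
    intro n c i
    have h1 := gram_lower_bound (fun j ↦ e j n) (fun j ↦ he j n) hγ0.le (hangle n) c
    rw [Fintype.card_fin, ← hδ_def] at h1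
    have h2 : ‖c i‖ ^ 2 ≤ ∑ j, ‖c j‖ ^ 2 :=
      Finset.single_le_sum (f := fun j ↦ ‖c j‖ ^ 2) (fun j _ ↦ by positivity) (Finset.mem_univ i)
    rw [← div_eq_inv_mul, le_div_iff₀ (Real.sqrt_pos.2 hδ)]
    refine le_of_sq_le_sq ?_ (norm_nonneg _)
    rw [mul_pow, Real.sq_sqrt hδ.le, mul_comm]
    exact (mul_le_mul_of_nonneg_left h2 hδ.le).trans h1
  have hbij := synth_bijective e he p hEli hEsp hK
  let G := ContinuousLinearEquiv.ofBijective (synth (𝕂 := 𝕂) e he p)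
    (LinearMap.ker_eq_bot.2 hbij.1) (LinearMap.range_eq_top.2 hbij.2)
  have hG : ∀ v, G v = synth e he p v := fun v ↦ rfl
  have key : ∀ v, G (P v) = σ (G v) := by
    intro v
    ext n
    rw [hG, hG, hσ, synth_apply, synth_apply, map_sum]
    refine Finset.sum_congr rfl fun i _ ↦ ?_
    rw [hP, map_smul, he_def, apply_eVec_succ S (hb i), smul_smul, mul_comm]
  refine ⟨G.symm, fun u ↦ ?_⟩
  rw [ContinuousLinearEquiv.symm_apply_eq, key, ContinuousLinearEquiv.apply_symm_apply]
end
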